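/- Let n ≥ 1 and let f : ℝⁿ → ℝ be a smooth, strictly positive probability density (∫_{ℝⁿ} f dx = 1) such that f log f and |∇f|²/f are integrable. Then the entropy isoperimetric inequality I(f) N(f) ≥ 2πen holds, where I(f) = ∫_{ℝⁿ} |∇f|²/f dx is the Fisher information and N(f) = exp((2/n)(-∫_{ℝⁿ} f log f dx)) is the Shannon entropy power. Equivalently, ∫_{ℝⁿ} f log f dx ≤ (n/2) log((1/(2πen)) ∫_{ℝⁿ} |∇f|²/f dx). -/

import Mathlib

open Real MeasureTheory

section OneDim
open Set Filter Topology

lemma EII.cdf_props (h : ℝ → ℝ) (hc : Continuous h) (hp : ∀ x, 0 < h x) (hi : Integrable h)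
    (h1 : ∫ x, h x = 1) :
    ∃ U : ℝ → ℝ, (∀ x, HasDerivAt U (h x) x) ∧ StrictMono U ∧ (∀ x, U x ∈ Ioo (0 : ℝ) 1) ∧
      (∀ u ∈ Ioo (0 : ℝ) 1, ∃ x, U x = u) := by
  let U : ℝ → ℝ := fun x => ∫ s in Iic x, h s
  have hU : ∀ x, U x = U 0 + ∫ s in (0 : ℝ)..x, h s := by
    intro x
    have := intervalIntegral.integral_Iic_sub_Iic (f := h) (μ := volume) (a := 0) (b := x)
      hi.integrableOn hi.integrableOn
    simp only [U]; linarith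
  have hd : ∀ x, HasDerivAt U (h x) x := by
    intro x
    have := (hc.integral_hasStrictDerivAt 0 x).hasDerivAt.const_add (U 0)
    exact this.congr_of_eventuallyEq (Eventually.of_forall hU)
  have hm : StrictMono U := strictMono_of_hasDerivAt_pos hd hp
  have hbot : Tendsto U atBot (𝓝 0) := tendsto_integral_Iic_zero tendsto_id
  have htop : Tendsto U atTop (𝓝 1) := by
    rw [← h1]
    exact (aecover_Iic tendsto_id).integral_tendsto_of_countably_generated hi
  have hcont : Continuous U := continuous_iff_continuousAt.2 fun x => (hd x).continuousAt
  refine ⟨U, hd, hm, fun x => ⟨?_, ?_⟩, ?_⟩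
  · exact (hm.monotone.le_of_tendsto hbot (x - 1)).trans_lt (hm (by linarith))
  · exact (hm (by linarith : x < x + 1)).trans_le (hm.monotone.ge_of_tendsto htop (x + 1))
  · intro u hu
    obtain ⟨a, ha⟩ := ((hbot.eventually (gt_mem_nhds hu.1))).exists
    obtain ⟨b, hb⟩ := ((htop.eventually (lt_mem_nhds hu.2))).exists
    have := mem_range_of_exists_le_of_exists_ge hcont ⟨a, ha.le⟩ ⟨b, hb.le⟩
    exact this

/-- standard Gaussian density -/
noncomputable def EII.gam (z : ℝ) : ℝ := (√(2 * π))⁻¹ * Real.exp (-(1 / 2) * z ^ 2)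

lemma EII.gam_pos (z : ℝ) : 0 < EII.gam z := by
  unfold EII.gam; positivity

lemma EII.gam_le (z : ℝ) : EII.gam z ≤ (√(2 * π))⁻¹ := by
  unfold EII.gam
  have : Real.exp (-(1 / 2) * z ^ 2) ≤ 1 := Real.exp_le_one_iff.2 (by nlinarith [sq_nonneg z])
  have h2 : 0 ≤ (√(2 * π))⁻¹ := by positivity
  nlinarith

lemma EII.gam_cont : Continuous EII.gam := by
  unfold EII.gam; fun_prop

lemma EII.gam_int : Integrable EII.gam :=
  (integrable_exp_neg_mul_sq (by norm_num : (0 : ℝ) < 1 / 2)).const_mul _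

lemma EII.gam_one : ∫ z, EII.gam z = 1 := by
  unfold EII.gam
  rw [integral_const_mul, integral_gaussian, show π / (1 / 2) = 2 * π by ring]
  exact inv_mul_cancel₀ (by positivity)

lemma EII.gam_deriv (z : ℝ) : HasDerivAt EII.gam (-z * EII.gam z) z := by
  unfold EII.gam
  have h := (((hasDerivAt_pow 2 z).const_mul (-(1 / 2))).exp).const_mul ((√(2 * π))⁻¹)
  refine h.congr_deriv ?_
  push_cast; ring

lemma EII.log_gam (z : ℝ) : Real.log (EII.gam z) = -(1 / 2) * Real.log (2 * π) - z ^ 2 / 2 := by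
  unfold EII.gam
  rw [Real.log_mul (by positivity) (by positivity), Real.log_inv, Real.log_sqrt (by positivity),
    Real.log_exp]
  ring

lemma EII.exists_transport (F : ℝ → ℝ) (hc : Continuous F) (hp : ∀ x, 0 < F x)
    (hi : Integrable F) (h1 : ∫ x, F x = 1) :
    ∃ T : ℝ → ℝ, ∀ x, HasDerivAt T (F x / EII.gam (T x)) x := by
  obtain ⟨U, hUd, hUm, hU01, -⟩ := EII.cdf_props F hc hp hi h1
  obtain ⟨P, hPd, hPm, -, hPs⟩ := EII.cdf_props _ EII.gam_cont EII.gam_pos EII.gam_int EII.gam_one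
  choose T hT using fun x => hPs (U x) (hU01 x)
  refine ⟨T, fun x => ?_⟩
  have hs : HasStrictDerivAt P (EII.gam (T x)) (T x) :=
    hasStrictDerivAt_of_hasDerivAt_of_continuousAt (Eventually.of_forall hPd)
      EII.gam_cont.continuousAt
  have hne := (EII.gam_pos (T x)).ne'
  have hl := (hs.to_localInverse hne).hasDerivAt
  rw [hT x] at hl
  have hcomp := hl.comp x (hUd x)
  have hev : ∀ᶠ y in 𝓝 x, T y = hs.localInverse P _ _ hne (U y) := by
    have h2 := hs.eventually_right_inverse hne
    rw [hT x] at h2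
    have h3 := (hUd x).continuousAt.eventually h2
    filter_upwards [h3] with y hy
    apply hPm.injective
    rw [hT, hy]
  have := hcomp.congr_of_eventuallyEq hev
  refine this.congr_deriv ?_
  field_simp

/-- bounded function has derivative frequently below epsilon -/
lemma EII.freq_top (V v : ℝ → ℝ) (hV : ∀ x, HasDerivAt V (v x) x) (C : ℝ) (hC : ∀ x, |V x| ≤ C)
    (ε : ℝ) (hε : 0 < ε) (A : ℝ) : ∃ b, A ≤ b ∧ v b ≤ ε := by
  by_contra! hcon
  have hC0 : 0 ≤ C := (abs_nonneg _).trans (hC 0)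
  obtain ⟨c, hc, hc2⟩ := exists_hasDerivAt_eq_slope V v
    (show A < A + (2 * C + 1) / ε by have : 0 < (2 * C + 1) / ε := by positivity
                                     linarith)
    (continuous_iff_continuousAt.2 fun x => (hV x).continuousAt).continuousOn (fun x _ => hV x)
  have h1 := hcon c hc.1.le
  rw [hc2, add_sub_cancel_left, lt_div_iff₀ (by positivity)] at h1
  have h2 := abs_le.1 (hC A)
  have h3 := abs_le.1 (hC (A + (2 * C + 1) / ε))
  have h4 : ε * ((2 * C + 1) / ε) = 2 * C + 1 := by field_simp
  linarith

lemma EII.freq_bot (V v : ℝ → ℝ) (hV : ∀ x, HasDerivAt V (v x) x) (C : ℝ) (hC : ∀ x, |V x| ≤ C)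
    (ε : ℝ) (hε : 0 < ε) (A : ℝ) : ∃ a, a ≤ A ∧ - ε ≤ v a := by
  obtain ⟨b, hb, hb2⟩ := EII.freq_top (fun x => V (-x)) (fun x => - v (-x))
    (fun x => ((hV (-x)).comp x (hasDerivAt_neg x)).congr_deriv (by ring)) C (fun x => hC _) ε hε (-A)
  exact ⟨-b, by linarith, by linarith⟩

lemma EII.oneDim (F G K : ℝ → ℝ) (hc : Continuous F) (hp : ∀ x, 0 < F x)
    (hi : Integrable F) (h1 : ∫ x, F x = 1) (hG : Integrable G)
    (hFG : ∀ x, F x = ∫ s in Iic x, G s) (hK : Integrable K)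
    (hGK : ∀ᵐ x, G x ^ 2 ≤ K x * F x) (hent : Integrable fun x => F x * Real.log (F x))
    (l : ℝ) (hl : 0 < l) :
    ∫ x, F x * Real.log (F x) ≤
      l ^ 2 / 2 * (∫ x, K x) - (1 + Real.log l + 1 / 2 * Real.log (2 * π)) := by
  obtain ⟨T, hT⟩ := EII.exists_transport F hc hp hi h1
  have hTc : Continuous T := continuous_iff_continuousAt.2 fun x => (hT x).continuousAt
  have hTdc : Continuous fun x => F x / EII.gam (T x) :=
    hc.div (EII.gam_cont.comp hTc) fun x => (EII.gam_pos _).ne'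
  have hderivT : deriv T = fun x => F x / EII.gam (T x) := funext fun x => (hT x).deriv
  have hTC1 : ContDiff ℝ 1 T := by
    rw [contDiff_one_iff_deriv]
    exact ⟨fun x => (hT x).differentiableAt, by rw [hderivT]; exact hTdc⟩
  set c := 1 + Real.log l + 1 / 2 * Real.log (2 * π) with hcdef
  have hV : ∀ x, HasDerivAt (fun x => - EII.gam (T x)) (F x * T x) x := by
    intro x
    have := ((EII.gam_deriv (T x)).comp x (hT x)).neg
    refine this.congr_deriv ?_
    have := (EII.gam_pos (T x)).ne'
    field_simp
  have hVb : ∀ x, |- EII.gam (T x)| ≤ (√(2 * π))⁻¹ := fun x => by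
    rw [abs_neg, abs_of_pos (EII.gam_pos _)]; exact EII.gam_le _
  -- finite interval estimate
  have key : ∀ a b, a ≤ b → ∫ x in a..b, F x * Real.log (F x) ≤
      l * (F b * T b - F a * T a) + l ^ 2 / 2 * (∫ x in a..b, K x) - c * ∫ x in a..b, F x := by
    intro a b hab
    have hFac : ∀ x, F x = F a + ∫ s in a..x, G s := by
      intro x
      have := intervalIntegral.integral_Iic_sub_Iic (f := G) (μ := volume) (a := a) (b := x)
        hG.integrableOn hG.integrableOn
      rw [hFG x, hFG a]; linarith
    have hGii : IntervalIntegrable G volume a b := hG.intervalIntegrable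
    let F' : ℝ → ℝ := fun x => ∫ s in a..x, G s
    have hFeq : F = fun x => F a + F' x := funext hFac
    have hF'AC : AbsolutelyContinuousOnInterval F' a b :=
      hGii.absolutelyContinuousOnInterval_intervalIntegral (by simp)
    have hconst : AbsolutelyContinuousOnInterval (fun _ : ℝ => F a) a b :=
      (contDiff_const.contDiffOn (s := uIcc a b)).absolutelyContinuousOnInterval
    have hFAC : AbsolutelyContinuousOnInterval F a b := by
      rw [hFeq]; exact hconst.add hF'AC
    have hTAC : AbsolutelyContinuousOnInterval T a b :=
      hTC1.contDiffOn.absolutelyContinuousOnInterval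
    have hdF : ∀ᵐ x, x ∈ uIcc a b → deriv F x = G x := by
      filter_upwards [hGii.ae_hasDerivAt_integral] with x hx hxm
      have := (hx hxm a (by simp)).const_add (F a)
      have h2 := this.deriv
      rw [hFeq]; exact h2
    have ibp := hFAC.integral_mul_deriv_eq_deriv_mul hTAC
    have hswap : ∫ x in a..b, deriv F x * T x = ∫ x in a..b, G x * T x := by
      apply intervalIntegral.integral_congr_ae
      filter_upwards [hdF] with x hx hxm
      rw [hx (uIoc_subset_uIcc hxm)]
    rw [hswap] at ibp
    have i1 : IntervalIntegrable (fun x => F x * deriv T x) volume a b := by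
      rw [hderivT]; exact (hc.mul hTdc).intervalIntegrable _ _
    have i2 : IntervalIntegrable (fun x => G x * T x) volume a b :=
      hGii.mul_continuousOn hTc.continuousOn
    have i3 : IntervalIntegrable K volume a b := hK.intervalIntegrable
    have i4 : IntervalIntegrable F volume a b := hi.intervalIntegrable
    have i5 : IntervalIntegrable (fun x => F x * T x ^ 2) volume a b :=
      (hc.mul (hTc.pow 2)).intervalIntegrable _ _
    have i6 : IntervalIntegrable (fun x => F x * Real.log (F x)) volume a b :=
      hent.intervalIntegrable
    have e1 : ∫ x in a..b, F x * Real.log (F x) ≤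
        ∫ x in a..b, (l * (F x * deriv T x) - c * F x - 1 / 2 * (F x * T x ^ 2)) := by
      apply intervalIntegral.integral_mono_on hab i6
        (((i1.const_mul l).sub (i4.const_mul c)).sub (i5.const_mul _))
      intro x _
      have hg := EII.gam_pos (T x)
      have hq : 0 < F x / EII.gam (T x) := div_pos (hp x) hg
      have hlog : Real.log (F x) =
          Real.log (l * (F x / EII.gam (T x))) - Real.log l + Real.log (EII.gam (T x)) := by
        rw [Real.log_mul hl.ne' hq.ne', Real.log_div (hp x).ne' hg.ne']; ring
      have hle := Real.log_le_sub_one_of_pos (mul_pos hl hq)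
      rw [EII.log_gam] at hlog
      have : Real.log (F x) ≤ l * (F x / EII.gam (T x)) - c - 1 / 2 * T x ^ 2 := by
        rw [hlog, hcdef]; linarith
      rw [hderivT]
      calc F x * Real.log (F x) ≤ F x * (l * (F x / EII.gam (T x)) - c - 1 / 2 * T x ^ 2) :=
            mul_le_mul_of_nonneg_left this (hp x).le
        _ = _ := by ring
    have e2 : ∫ x in a..b, -(l * (G x * T x)) ≤
        ∫ x in a..b, (l ^ 2 / 2 * K x + 1 / 2 * (F x * T x ^ 2)) := by
      apply intervalIntegral.integral_mono_ae hab (i2.const_mul l).neg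
        ((i3.const_mul _).add (i5.const_mul _))
      filter_upwards [hGK] with x hx
      have hF := hp x
      have : G x ^ 2 / F x ≤ K x := by rwa [div_le_iff₀ hF]
      have h3 : -(l * (G x * T x)) ≤ l ^ 2 / 2 * (G x ^ 2 / F x) + 1 / 2 * (F x * T x ^ 2) := by
        have : l ^ 2 / 2 * (G x ^ 2 / F x) + 1 / 2 * (F x * T x ^ 2) + l * (G x * T x)
            = (l * G x + F x * T x) ^ 2 / (2 * F x) := by field_simp; ring
        have h4 : 0 ≤ (l * G x + F x * T x) ^ 2 / (2 * F x) := by positivity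
        linarith
      have h5 : l ^ 2 / 2 * (G x ^ 2 / F x) ≤ l ^ 2 / 2 * K x :=
        mul_le_mul_of_nonneg_left this (by positivity)
      show -(l * (G x * T x)) ≤ _
      linarith
    rw [intervalIntegral.integral_sub ((i1.const_mul l).sub (i4.const_mul c)) (i5.const_mul _),
      intervalIntegral.integral_sub (i1.const_mul l) (i4.const_mul c),
      intervalIntegral.integral_const_mul, intervalIntegral.integral_const_mul,
      intervalIntegral.integral_const_mul, ibp] at e1
    rw [intervalIntegral.integral_neg, intervalIntegral.integral_add (i3.const_mul _)
      (i5.const_mul _), intervalIntegral.integral_const_mul, intervalIntegral.integral_const_mul,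
      intervalIntegral.integral_const_mul] at e2
    linarith
  -- sequences
  have hε : ∀ k : ℕ, (0 : ℝ) < 1 / ((k : ℝ) + 1) := fun k => by positivity
  choose b hb hb2 using fun k : ℕ => EII.freq_top _ _ hV _ hVb _ (hε k) (k : ℝ)
  choose a ha ha2 using fun k : ℕ => EII.freq_bot _ _ hV _ hVb _ (hε k) (-(k : ℝ))
  have hbt : Tendsto b atTop atTop := tendsto_atTop_mono hb tendsto_natCast_atTop_atTop
  have hat : Tendsto a atTop atBot :=
    tendsto_atBot_mono ha (tendsto_neg_atTop_atBot.comp tendsto_natCast_atTop_atTop)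
  have hlim0 : Tendsto (fun k : ℕ => (1 : ℝ) / ((k : ℝ) + 1)) atTop (𝓝 0) :=
    tendsto_one_div_add_atTop_nhds_zero_nat
  have hlim := (((hlim0.const_mul (2 * l)).add
    ((intervalIntegral_tendsto_integral hK hat hbt).const_mul (l ^ 2 / 2))).sub
      ((intervalIntegral_tendsto_integral hi hat hbt).const_mul c))
  have hfin := le_of_tendsto_of_tendsto' (intervalIntegral_tendsto_integral hent hat hbt) hlim
    (fun k => by
      have hk : (0 : ℝ) ≤ k := Nat.cast_nonneg k
      have h := key (a k) (b k) (by linarith [ha k, hb k])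
      have h3 : l * (F (b k) * T (b k) - F (a k) * T (a k)) ≤ 2 * l * (1 / ((k : ℝ) + 1)) := by
        nlinarith [hb2 k, ha2 k]
      linarith)
  rw [h1] at hfin
  linarith
end OneDim

section Tensor
open Set Filter Topology

/-- Cauchy–Schwarz for the Fisher information of a marginal. -/
lemma EII.cs {Y : Type*} [MeasurableSpace Y] (ν : Measure Y) (p q : Y → ℝ) (hp : ∀ y, 0 < p y)
    (hpi : Integrable p ν) (hqi : Integrable q ν) (hk : Integrable (fun y => q y ^ 2 / p y) ν)
    (hpos : 0 < ∫ y, p y ∂ν) :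
    (∫ y, q y ∂ν) ^ 2 ≤ (∫ y, q y ^ 2 / p y ∂ν) * ∫ y, p y ∂ν := by
  set s := (∫ y, q y ∂ν) / ∫ y, p y ∂ν with hs
  have h0 : 0 ≤ ∫ y, (q y ^ 2 / p y - 2 * s * q y + s ^ 2 * p y) ∂ν := by
    apply integral_nonneg
    intro y
    have := hp y
    have h : q y ^ 2 / p y - 2 * s * q y + s ^ 2 * p y = (q y - s * p y) ^ 2 / p y := by
      field_simp; ring
    show 0 ≤ q y ^ 2 / p y - 2 * s * q y + s ^ 2 * p y
    rw [h]; positivity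
  have hsub : Integrable (fun y => q y ^ 2 / p y - 2 * s * q y) ν := hk.sub (hqi.const_mul _)
  rw [integral_add hsub (hpi.const_mul _),
    integral_sub hk (hqi.const_mul _), integral_const_mul, integral_const_mul] at h0
  have hsP : s * ∫ y, p y ∂ν = ∫ y, q y ∂ν := by rw [hs]; field_simp
  have h2 : 0 ≤ (∫ y, q y ^ 2 / p y ∂ν) - s * ∫ y, q y ∂ν := by
    have : s ^ 2 * ∫ y, p y ∂ν = s * ∫ y, q y ∂ν := by rw [← hsP]; ring
    linarith
  have h3 := mul_nonneg h2 hpos.le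
  rw [sub_mul] at h3
  have h4 : s * (∫ y, q y ∂ν) * ∫ y, p y ∂ν = (∫ y, q y ∂ν) ^ 2 := by
    rw [mul_right_comm, hsP]; ring
  linarith

lemma EII.tensor {Y : Type*} [MeasurableSpace Y] (ν : Measure Y) [SFinite ν] [NeZero ν]
    (f f' : ℝ × Y → ℝ) (hd : ∀ x y, HasDerivAt (fun s => f (s, y)) (f' (x, y)) x)
    (hpos : ∀ z, 0 < f z) (hf'm : AEStronglyMeasurable f' ((volume : Measure ℝ).prod ν))
    (hi : Integrable f ((volume : Measure ℝ).prod ν))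
    (h1 : ∫ z, f z ∂((volume : Measure ℝ).prod ν) = 1)
    (hent : Integrable (fun z => f z * Real.log (f z)) ((volume : Measure ℝ).prod ν))
    (hfi : Integrable (fun z => f' z ^ 2 / f z) ((volume : Measure ℝ).prod ν))
    (J : ℝ → ℝ) (hJ : Integrable J) (c : ℝ)
    (hY : ∀ᵐ x : ℝ, ∫ y, f (x, y) * Real.log (f (x, y)) ∂ν ≤
      (∫ y, f (x, y) ∂ν) * Real.log (∫ y, f (x, y) ∂ν) + J x - c * ∫ y, f (x, y) ∂ν)
    (l : ℝ) (hl : 0 < l) :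
    ∫ z, f z * Real.log (f z) ∂((volume : Measure ℝ).prod ν) ≤
      l ^ 2 / 2 * (∫ z, f' z ^ 2 / f z ∂((volume : Measure ℝ).prod ν)) + (∫ x, J x) - c
        - (1 + Real.log l + 1 / 2 * Real.log (2 * π)) := by
  have hf' : Integrable f' ((volume : Measure ℝ).prod ν) := by
    refine (hfi.add hi).mono' hf'm (Eventually.of_forall fun z => ?_)
    have hp := hpos z
    have h2 : f' z ^ 2 / f z + f z - |f' z| = ((|f' z| - f z / 2) ^ 2 + 3 / 4 * f z ^ 2) / f z := by
      rw [← sq_abs (f' z)]; field_simp; ring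
    have h3 : 0 ≤ ((|f' z| - f z / 2) ^ 2 + 3 / 4 * f z ^ 2) / f z := by positivity
    show |f' z| ≤ f' z ^ 2 / f z + f z
    linarith
  let F : ℝ → ℝ := fun x => ∫ y, f (x, y) ∂ν
  let G : ℝ → ℝ := fun x => ∫ y, f' (x, y) ∂ν
  let K : ℝ → ℝ := fun x => ∫ y, f' (x, y) ^ 2 / f (x, y) ∂ν
  have hFi : Integrable F := hi.integral_prod_left
  have hGi : Integrable G := hf'.integral_prod_left
  have hKi : Integrable K := hfi.integral_prod_left
  -- slices
  have hslice : ∀ x : ℝ, ∀ᵐ y ∂ν, f (x, y) = ∫ s in Iic x, f' (s, y) := by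
    intro x
    filter_upwards [hi.prod_left_ae, hf'.prod_left_ae] with y hy hy'
    have ht := tendsto_zero_of_hasDerivAt_of_integrableOn_Iic (a := x)
      (f := fun s => f (s, y)) (f' := fun s => f' (s, y))
      (fun s _ => hd s y) hy'.integrableOn hy.integrableOn
    have := integral_Iic_of_hasDerivAt_of_tendsto' (a := x)
      (f := fun s => f (s, y)) (f' := fun s => f' (s, y))
      (fun s _ => hd s y) hy'.integrableOn ht
    rw [this, sub_zero]
  have hrestr : ∀ x : ℝ, Integrable f' (((volume : Measure ℝ).restrict (Iic x)).prod ν) := by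
    intro x
    have := Measure.prod_restrict (μ := (volume : Measure ℝ)) (ν := ν) (Iic x) univ
    rw [Measure.restrict_univ] at this
    rw [this]
    exact hf'.restrict
  have hFx : ∀ x, Integrable (fun y => f (x, y)) ν := by
    intro x
    refine (hrestr x).integral_prod_right.congr ?_
    filter_upwards [hslice x] with y hy
    exact hy.symm
  have hFG : ∀ x, F x = ∫ s in Iic x, G s := by
    intro x
    have h2 : F x = ∫ y, (∫ s in Iic x, f' (s, y)) ∂ν := integral_congr_ae (hslice x)
    rw [h2]
    exact (integral_integral_swap (f := fun s y => f' (s, y)) (hrestr x)).symm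
  have hFpos : ∀ x, 0 < F x := by
    intro x
    rw [integral_pos_iff_support_of_nonneg (fun y => (hpos _).le) (hFx x)]
    have : Function.support (fun y => f (x, y)) = univ := by
      ext y; simp [(hpos (x, y)).ne']
    rw [this]
    exact (Measure.measure_univ_ne_zero.2 (NeZero.ne ν)).bot_lt
  have hFc : Continuous F := by
    have : F = fun x => F 0 + ∫ s in (0 : ℝ)..x, G s := by
      funext x
      have := intervalIntegral.integral_Iic_sub_Iic (f := G) (μ := volume) (a := 0) (b := x)
        hGi.integrableOn hGi.integrableOn
      rw [hFG x, hFG 0]; linarith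
    rw [this]
    exact continuous_const.add
      (intervalIntegral.continuous_primitive (fun a b => hGi.intervalIntegrable) 0)
  have hF1 : ∫ x, F x = 1 := by
    rw [← h1, integral_prod _ hi]
  have hGK : ∀ᵐ x, G x ^ 2 ≤ K x * F x := by
    filter_upwards [hf'.prod_right_ae, hfi.prod_right_ae] with x hx hx'
    exact EII.cs ν _ _ (fun y => hpos _) (hFx x) hx hx' (hFpos x)
  have hEi : Integrable (fun x => ∫ y, f (x, y) * Real.log (f (x, y)) ∂ν) := hent.integral_prod_left
  have hFent : Integrable fun x => F x * Real.log (F x) := by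
    set B := ∫ s, |G s| with hB
    have hFB : ∀ x, F x ≤ B := by
      intro x
      rw [hFG x]
      calc ∫ s in Iic x, G s ≤ ∫ s in Iic x, |G s| :=
            integral_mono hGi.integrableOn hGi.abs.integrableOn fun s => le_abs_self _
        _ ≤ B := setIntegral_le_integral hGi.abs (Eventually.of_forall fun s => abs_nonneg _)
    have hlow : Integrable (fun x => (∫ y, f (x, y) * Real.log (f (x, y)) ∂ν) - J x + c * F x) :=
      (hEi.sub hJ).add (hFi.const_mul c)
    have hup : Integrable (fun x => F x * Real.log B) := hFi.mul_const _
    have hm : AEStronglyMeasurable (fun x => F x * Real.log (F x)) volume :=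
      (hFc.mul (hFc.log fun x => (hFpos x).ne')).aestronglyMeasurable
    refine (hlow.abs.add hup.abs).mono' hm ?_
    filter_upwards [hY] with x hx
    have hb : F x * Real.log (F x) ≤ F x * Real.log B :=
      mul_le_mul_of_nonneg_left (Real.log_le_log (hFpos x) (hFB x)) (hFpos x).le
    have hx2 : (∫ y, f (x, y) * Real.log (f (x, y)) ∂ν) - J x + c * F x ≤ F x * Real.log (F x) := by
      simp only [F]; linarith
    show |F x * Real.log (F x)| ≤
      |(∫ y, f (x, y) * Real.log (f (x, y)) ∂ν) - J x + c * F x| + |F x * Real.log B|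
    rw [abs_le]
    constructor
    · have := neg_abs_le ((∫ y, f (x, y) * Real.log (f (x, y)) ∂ν) - J x + c * F x)
      have := abs_nonneg (F x * Real.log B)
      linarith
    · have := le_abs_self (F x * Real.log B)
      have := abs_nonneg ((∫ y, f (x, y) * Real.log (f (x, y)) ∂ν) - J x + c * F x)
      linarith
  have hone := EII.oneDim F G K hFc hFpos hFi hF1 hGi hFG hKi hGK hFent l hl
  rw [integral_prod _ hent, integral_prod _ hfi]
  have htot : ∫ x, (∫ y, f (x, y) * Real.log (f (x, y)) ∂ν) ≤
      ∫ x, (F x * Real.log (F x) + J x - c * F x) :=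
    integral_mono_ae hEi ((hFent.add hJ).sub (hFi.const_mul c)) hY
  rw [integral_sub (hFent.fun_add hJ) (hFi.const_mul c), integral_add hFent hJ, integral_const_mul,
    hF1] at htot
  linarith

end Tensor

section Induct
open Set Filter Topology

/-- The scale-parametrised inequality with a mass-one hypothesis. -/
def EII.P1 (n : ℕ) : Prop :=
  ∀ (f : (Fin n → ℝ) → ℝ) (D : Fin n → (Fin n → ℝ) → ℝ),
    Continuous f → (∀ i, Continuous (D i)) →
    (∀ i x, HasDerivAt (fun s => f (Function.update x i s)) (D i x) (x i)) →
    (∀ x, 0 < f x) → Integrable f → (∫ x, f x = 1) →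
    Integrable (fun x => f x * Real.log (f x)) →
    (∀ i, Integrable (fun x => D i x ^ 2 / f x)) →
    ∀ l : ℝ, 0 < l →
      ∫ x, f x * Real.log (f x) ≤ l ^ 2 / 2 * (∑ i, ∫ x, D i x ^ 2 / f x)
        - n * (1 + Real.log l + 1 / 2 * Real.log (2 * π))

lemma EII.P1_scale (n : ℕ) (h : EII.P1 n) (f : (Fin n → ℝ) → ℝ)
    (D : Fin n → (Fin n → ℝ) → ℝ)
    (hf : Continuous f) (hD : ∀ i, Continuous (D i))
    (hd : ∀ i x, HasDerivAt (fun s => f (Function.update x i s)) (D i x) (x i))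
    (hp : ∀ x, 0 < f x) (hi : Integrable f) (hM : 0 < ∫ x, f x)
    (he : Integrable (fun x => f x * Real.log (f x)))
    (hfi : ∀ i, Integrable (fun x => D i x ^ 2 / f x)) (l : ℝ) (hl : 0 < l) :
      ∫ x, f x * Real.log (f x) ≤ (∫ x, f x) * Real.log (∫ x, f x) +
        l ^ 2 / 2 * (∑ i, ∫ x, D i x ^ 2 / f x)
        - n * (1 + Real.log l + 1 / 2 * Real.log (2 * π)) * ∫ x, f x := by
  set M := ∫ x, f x with hMdef
  have e1 : ∀ x, M⁻¹ * f x * Real.log (M⁻¹ * f x) =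
      M⁻¹ * (f x * Real.log (f x)) - M⁻¹ * Real.log M * f x := by
    intro x
    rw [Real.log_mul (inv_ne_zero hM.ne') (hp x).ne', Real.log_inv]; ring
  have e2 : ∀ i x, (M⁻¹ * D i x) ^ 2 / (M⁻¹ * f x) = M⁻¹ * (D i x ^ 2 / f x) := by
    intro i x
    have := hp x
    field_simp
  have := h (fun x => M⁻¹ * f x) (fun i x => M⁻¹ * D i x) (hf.const_mul _)
    (fun i => (hD i).const_mul _) (fun i x => (hd i x).const_mul _)
    (fun x => mul_pos (inv_pos.2 hM) (hp x)) (hi.const_mul _)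
    (by rw [integral_const_mul]; exact inv_mul_cancel₀ hM.ne')
    (by simp_rw [e1]; exact (he.const_mul _).sub (hi.const_mul _))
    (fun i => by simp_rw [e2]; exact (hfi i).const_mul _) l hl
  simp_rw [e1, e2, integral_const_mul, ← Finset.mul_sum] at this
  rw [integral_sub (he.const_mul _) (hi.const_mul _), integral_const_mul, integral_const_mul,
    ← hMdef] at this
  have h2 := mul_le_mul_of_nonneg_left this hM.le
  have h3 : M * M⁻¹ = 1 := mul_inv_cancel₀ hM.ne'
  have e3 : M * (M⁻¹ * (∫ x, f x * Real.log (f x)) - M⁻¹ * Real.log M * M) =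
      (M * M⁻¹) * ((∫ x, f x * Real.log (f x)) - M * Real.log M) := by ring
  have e4 : M * (l ^ 2 / 2 * (M⁻¹ * ∑ i, ∫ x, D i x ^ 2 / f x)
        - n * (1 + Real.log l + 1 / 2 * Real.log (2 * π))) =
      (M * M⁻¹) * (l ^ 2 / 2 * ∑ i, ∫ x, D i x ^ 2 / f x)
        - n * (1 + Real.log l + 1 / 2 * Real.log (2 * π)) * M := by ring
  rw [e3, e4, h3] at h2
  linarith

lemma EII.P1_all (n : ℕ) : EII.P1 n := by
  induction n with
  | zero =>
    intro f D hf hD hd hp hi h1 he hfi l hl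
    have hv : (volume : Measure (Fin 0 → ℝ)) = Measure.dirac default := by
      rw [volume_pi]; exact Measure.pi_of_empty _ _
    rw [hv, integral_dirac] at h1
    rw [hv, integral_dirac, h1]
    simp
  | succ n ih =>
    intro f D hf hD hd hp hi h1 he hfi l hl
    set c := 1 + Real.log l + 1 / 2 * Real.log (2 * π) with hc
    let e := (MeasurableEquiv.piFinSuccAbove (fun _ : Fin (n + 1) => ℝ) 0).symm
    have hmp : MeasurePreserving e (volume.prod volume) volume :=
      (volume_preserving_piFinSuccAbove (fun _ : Fin (n + 1) => ℝ) 0).symm _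
    have hez : ∀ z, e z = Fin.cons z.1 z.2 := fun z => by
      simp [e, MeasurableEquiv.piFinSuccAbove]
      rfl
    have hecont : Continuous (fun z : ℝ × (Fin n → ℝ) => (Fin.cons z.1 z.2 : Fin (n + 1) → ℝ)) :=
      Continuous.finCons continuous_fst continuous_snd
    have tr : ∀ g : (Fin (n + 1) → ℝ) → ℝ, ∫ z : ℝ × (Fin n → ℝ), g (Fin.cons z.1 z.2)
        ∂(volume.prod volume) = ∫ x, g x := by
      intro g
      rw [← hmp.integral_comp e.measurableEmbedding g]
      simp_rw [hez]
    have tri : ∀ g : (Fin (n + 1) → ℝ) → ℝ, Integrable g → Integrable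
        (fun z : ℝ × (Fin n → ℝ) => g (Fin.cons z.1 z.2)) (volume.prod volume) := by
      intro g hg
      have := (hmp.integrable_comp_emb e.measurableEmbedding).2 hg
      refine this.congr (Eventually.of_forall fun z => ?_)
      simp [hez]
    let J : ℝ → ℝ := fun x => l ^ 2 / 2 * (∑ i : Fin n, ∫ y : Fin n → ℝ,
      D i.succ (Fin.cons x y) ^ 2 / f (Fin.cons x y))
    have hJi : ∀ i : Fin n, Integrable (fun x : ℝ => ∫ y : Fin n → ℝ,
        D i.succ (Fin.cons x y) ^ 2 / f (Fin.cons x y)) := fun i =>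
      (tri _ (hfi i.succ)).integral_prod_left
    have hJ : Integrable J := (integrable_finsetSum _ fun i _ => hJi i).const_mul _
    have hJint : ∫ x, J x = l ^ 2 / 2 * ∑ i : Fin n, ∫ x, D i.succ x ^ 2 / f x := by
      simp only [J]
      rw [integral_const_mul, integral_finsetSum _ fun i _ => hJi i]
      congr 1
      refine Finset.sum_congr rfl fun i _ => ?_
      rw [← tr, integral_prod _ (tri _ (hfi i.succ))]
    have hs : ∀ᵐ x : ℝ, ∀ i : Fin n, Integrable (fun y : Fin n → ℝ =>
        D i.succ (Fin.cons x y) ^ 2 / f (Fin.cons x y)) :=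
      ae_all_iff.2 fun i => (tri _ (hfi i.succ)).prod_right_ae
    have main := EII.tensor (volume : Measure (Fin n → ℝ))
      (fun z => f (Fin.cons z.1 z.2)) (fun z => D 0 (Fin.cons z.1 z.2))
      (fun x y => by
        have := hd 0 (Fin.cons x y)
        simpa using this)
      (fun z => hp _) ((hD 0).comp hecont).aestronglyMeasurable
      (tri _ hi) (by rw [tr, h1]) (tri _ he) (tri _ (hfi 0)) J hJ (n * c)
      (by
        filter_upwards [(tri _ hi).prod_right_ae, (tri _ he).prod_right_ae, hs] with x hx1 hx2 hx3
        have hcx : Continuous (fun y : Fin n → ℝ => (Fin.cons x y : Fin (n + 1) → ℝ)) :=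
          hecont.comp (Continuous.prodMk_right x)
        refine EII.P1_scale n ih (fun y => f (Fin.cons x y)) (fun i y => D i.succ (Fin.cons x y))
          (hf.comp hcx) (fun i => (hD _).comp hcx) ?_ (fun y => hp _) hx1 ?_ hx2 hx3 l hl
        · intro i y
          have := hd i.succ (Fin.cons x y)
          simpa [Fin.cons_update] using this
        · rw [integral_pos_iff_support_of_nonneg (fun y => (hp _).le) hx1]
          have : Function.support (fun y : Fin n → ℝ => f (Fin.cons x y)) = univ := by
            ext y; simp [(hp (Fin.cons x y)).ne']
          rw [this]
          exact (Measure.measure_univ_ne_zero.2 (NeZero.ne _)).bot_lt)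
      l hl
    rw [tr (fun x => f x * Real.log (f x)), tr (fun x => D 0 x ^ 2 / f x), hJint] at main
    rw [Fin.sum_univ_succ]
    push_cast
    linarith
end Induct
/-- Stam's entropy isoperimetric inequality on `ℝⁿ`: `I(f)·N(f) ≥ 2πen`, equivalently
`∫ f log f ≤ (n/2) log((1/(2πen)) ∫ |∇f|²/f)`. -/
theorem entropy_isoperimetric_inequality (n : ℕ) (hn : 1 ≤ n)
    (f : EuclideanSpace ℝ (Fin n) → ℝ)
    (hf_smooth : ContDiff ℝ (⊤ : ℕ∞) f) (hf_pos : ∀ x, 0 < f x)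
    (hf_int : ∫ x, f x = 1)
    (hf_ent : Integrable (fun x => f x * Real.log (f x)))
    (hf_fisher : Integrable (fun x => ‖gradient f x‖ ^ 2 / f x)) :
    2 * π * Real.exp 1 * n ≤
      (∫ x, ‖gradient f x‖ ^ 2 / f x) *
        Real.exp ((2 / (n : ℝ)) * (-∫ x, f x * Real.log (f x))) ∧
    ∫ x, f x * Real.log (f x) ≤
      ((n : ℝ) / 2) *
        Real.log ((1 / (2 * π * Real.exp 1 * n)) * ∫ x, ‖gradient f x‖ ^ 2 / f x) := by
  have hn0 : (0 : ℝ) < n := by exact_mod_cast hn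
  have hi : Integrable f := by
    by_contra h
    rw [integral_undef h] at hf_int
    exact zero_ne_one hf_int
  have hdf : ∀ x, HasFDerivAt f (fderiv ℝ f x) x := fun x =>
    (hf_smooth.differentiable (by simp) x).hasFDerivAt
  have hdc : Continuous (fderiv ℝ f) := hf_smooth.continuous_fderiv (by simp)
  let L := (PiLp.continuousLinearEquiv 2 ℝ (fun _ : Fin n => ℝ)).symm
  let g : (Fin n → ℝ) → ℝ := fun x => f (WithLp.toLp 2 x)
  let D : Fin n → (Fin n → ℝ) → ℝ := fun i x =>
    fderiv ℝ f (WithLp.toLp 2 x) (EuclideanSpace.single i 1)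
  have hLc : Continuous (fun x : Fin n → ℝ => (WithLp.toLp 2 x : EuclideanSpace ℝ (Fin n))) :=
    L.continuous
  have hmp := PiLp.volume_preserving_toLp (Fin n)
  have hemb : MeasurableEmbedding
      (fun x : Fin n → ℝ => (WithLp.toLp 2 x : EuclideanSpace ℝ (Fin n))) :=
    (MeasurableEquiv.toLp 2 (Fin n → ℝ)).measurableEmbedding
  have tr : ∀ q : EuclideanSpace ℝ (Fin n) → ℝ, ∫ x : Fin n → ℝ, q (WithLp.toLp 2 x) = ∫ x, q x :=
    fun q => hmp.integral_comp hemb q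
  have tri : ∀ q : EuclideanSpace ℝ (Fin n) → ℝ, Integrable q →
      Integrable (fun x : Fin n → ℝ => q (WithLp.toLp 2 x)) :=
    fun q hq => (hmp.integrable_comp_emb hemb).2 hq
  have hgrad : ∀ x, ‖gradient f x‖ ^ 2 = ∑ i, (fderiv ℝ f x (EuclideanSpace.single i 1)) ^ 2 := by
    intro x
    rw [EuclideanSpace.real_norm_sq_eq]
    refine Finset.sum_congr rfl fun i _ => ?_
    congr 1
    have : inner ℝ (gradient f x) (EuclideanSpace.single i 1) =
        fderiv ℝ f x (EuclideanSpace.single i 1) := by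
      rw [gradient, InnerProductSpace.toDual_symm_apply]
    rw [← this, EuclideanSpace.inner_single_right]
    simp
  have hDi : ∀ i, Integrable (fun x => (fderiv ℝ f x (EuclideanSpace.single i 1)) ^ 2 / f x) := by
    intro i
    refine hf_fisher.mono' ?_ (Filter.Eventually.of_forall fun x => ?_)
    · refine Continuous.aestronglyMeasurable ?_
      exact ((hdc.clm_apply continuous_const).pow 2).div hf_smooth.continuous
        fun x => (hf_pos x).ne'
    · have hp := hf_pos x
      rw [Real.norm_of_nonneg (by positivity), hgrad]
      gcongr
      exact Finset.single_le_sum (f := fun i => (fderiv ℝ f x (EuclideanSpace.single i 1)) ^ 2)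
        (fun j _ => sq_nonneg _) (Finset.mem_univ i)
  set I := ∫ x, ‖gradient f x‖ ^ 2 / f x with hI
  set E := ∫ x, f x * Real.log (f x) with hE
  have hIsum : ∑ i, ∫ x, D i x ^ 2 / g x = I := by
    rw [hI]
    simp_rw [hgrad, Finset.sum_div]
    rw [integral_finsetSum _ fun i _ => hDi i]
    exact Finset.sum_congr rfl fun i _ =>
      tr (fun x => (fderiv ℝ f x (EuclideanSpace.single i 1)) ^ 2 / f x)
  have main : ∀ l : ℝ, 0 < l →
      E ≤ l ^ 2 / 2 * I - n * (1 + Real.log l + 1 / 2 * Real.log (2 * π)) := by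
    intro l hl
    have := EII.P1_all n g D (hf_smooth.continuous.comp hLc)
      (fun i => (hdc.comp hLc).clm_apply continuous_const)
      (fun i x => by
        have h1 := hasDerivAt_update x i (x i)
        have h2 := L.hasFDerivAt.comp_hasDerivAt (x i) h1
        have h3 := (hdf (L (Function.update x i (x i)))).comp_hasDerivAt (x i) h2
        rw [Function.update_eq_self] at h3
        exact h3)
      (fun x => hf_pos _) (tri _ hi) ((tr f).trans hf_int) (tri _ hf_ent)
      (fun i => tri _ (hDi i)) l hl
    rw [hIsum] at this
    have h2 := tr (fun x => f x * Real.log (f x))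
    rw [← hE] at h2
    rw [← h2]
    exact this
  have hI0 : 0 ≤ I := integral_nonneg fun x => by have := hf_pos x; positivity
  have hIpos : 0 < I := by
    rcases hI0.lt_or_eq with h | h
    · exact h
    exfalso
    have := main (Real.exp (-(E / n) - 1 / 2 * Real.log (2 * π))) (Real.exp_pos _)
    rw [← h, Real.log_exp] at this
    have h2 : (n : ℝ) * (1 + (-(E / n) - 1 / 2 * Real.log (2 * π)) + 1 / 2 * Real.log (2 * π))
        = n - E := by field_simp; ring
    rw [h2] at this
    linarith
  have h2nd : E ≤ ((n : ℝ) / 2) * Real.log ((1 / (2 * π * Real.exp 1 * n)) * I) := by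
    have h := main (√(n / I)) (Real.sqrt_pos.2 (by positivity))
    rw [Real.sq_sqrt (by positivity), Real.log_sqrt (by positivity),
      Real.log_div hn0.ne' hIpos.ne'] at h
    rw [Real.log_mul (by positivity) hIpos.ne', one_div, Real.log_inv,
      Real.log_mul (by positivity) hn0.ne', Real.log_mul (by positivity) (by positivity),
      Real.log_exp]
    have h3 : (n : ℝ) / I / 2 * I = n / 2 := by field_simp
    rw [h3] at h
    linarith
  refine ⟨?_, h2nd⟩
  have hA : 0 < 2 * π * Real.exp 1 * n := by positivity
  have h4 : -Real.log ((1 / (2 * π * Real.exp 1 * n)) * I) ≤ (2 / (n : ℝ)) * (-E) := by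
    have h5 := mul_le_mul_of_nonneg_left h2nd (by positivity : (0 : ℝ) ≤ 2 / n)
    rw [← mul_assoc, show (2 / (n : ℝ)) * (n / 2) = 1 by field_simp, one_mul] at h5
    linarith
  have h6 := Real.exp_le_exp.2 h4
  rw [Real.exp_neg, Real.exp_log (by positivity)] at h6
  have h7 := mul_le_mul_of_nonneg_left h6 hI0
  refine le_trans (le_of_eq ?_) h7
  field_simp
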